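/- Let A ⊆ B ⊆ ∂Δ_n be simplicial complexes. (1) If the sets A_{{σ}} = {τ ∉ A : τ ⊆ σ}, for σ ∈ E(B), are pairwise disjoint, then Σ_{Y complex, A⊆Y⊆B} P̲_n(Y) = (∏_{τ∈A} p_τ) · ∏_{σ∈E(B)} (1 − P_{{σ}}), where P_{{σ}} = ∏_{τ∈A_{{σ}}} p_τ. (2) If the sets B_{{σ}} = {τ ∈ B : τ ⊇ σ}, for σ ∈ M(A), are pairwise disjoint, then Σ_{Y complex, A⊆Y⊆B} P̄_n(Y) = (∏_{τ∈∂Δ_n, τ∉B} q_τ) · ∏_{σ∈M(A)} (1 − Q_{{σ}}), where Q_{{σ}} = ∏_{τ∈B_{{σ}}} q_τ. -/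

import Mathlib

open Finset

/-- The full simplex `Δₙ`: all nonempty subsets of `[n] = {0,…,n}`. -/
def simplexAll (n : ℕ) : Finset (Finset (Fin (n+1))) :=
  Finset.univ.filter fun σ => σ.Nonempty

/-- The boundary `∂Δₙ`: all nonempty proper subsets of `[n]`. -/
def bdry (n : ℕ) : Finset (Finset (Fin (n+1))) :=
  Finset.univ.filter fun σ => σ.Nonempty ∧ σ ≠ Finset.univ

/-- A hypergraph is a simplicial complex if it is closed under passing to
nonempty subsets. -/
def IsComplex {n : ℕ} (X : Finset (Finset (Fin (n+1)))) : Prop :=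
  ∀ σ ∈ X, ∀ τ : Finset (Fin (n+1)), τ ⊆ σ → τ.Nonempty → τ ∈ X

instance {n : ℕ} (X : Finset (Finset (Fin (n+1)))) : Decidable (IsComplex X) :=
  inferInstanceAs (Decidable (∀ σ ∈ X, ∀ τ : Finset (Fin (n+1)), τ ⊆ σ → τ.Nonempty → τ ∈ X))

/-- The dual hypergraph `c(X) = {σ̂ : σ ∈ ∂Δₙ, σ ∉ X}`, where `σ̂ = [n] \ σ`. -/
def dual {n : ℕ} (X : Finset (Finset (Fin (n+1)))) : Finset (Finset (Fin (n+1))) :=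
  (bdry n \ X).image fun σ => σᶜ

/-- `X̄`: the smallest simplicial complex containing the hypergraph `X`. -/
def clUp {n : ℕ} (X : Finset (Finset (Fin (n+1)))) : Finset (Finset (Fin (n+1))) :=
  Finset.univ.filter fun τ => τ.Nonempty ∧ ∃ σ ∈ X, τ ⊆ σ

/-- `X̲`: the largest simplicial complex contained in the hypergraph `X`. -/
def clLow {n : ℕ} (X : Finset (Finset (Fin (n+1)))) : Finset (Finset (Fin (n+1))) :=
  Finset.univ.filter fun τ => τ.Nonempty ∧ ∀ σ : Finset (Fin (n+1)), σ ⊆ τ → σ.Nonempty → σ ∈ X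

/-- The Bernoulli measure with parameters `p` on hypergraphs contained in the
ambient set `S` of simplices: `P(X) = ∏_{σ∈X} p σ · ∏_{σ∈S\X} (1 - p σ)`. -/
def bern {n : ℕ} (S : Finset (Finset (Fin (n+1)))) (p : Finset (Fin (n+1)) → ℝ)
    (X : Finset (Finset (Fin (n+1)))) : ℝ :=
  (∏ σ ∈ X, p σ) * ∏ σ ∈ S \ X, (1 - p σ)

/-- The upper measure: `P̄(Y) = Σ_{X ⊆ S, X̄ = Y} P(X)`. -/
def upperP {n : ℕ} (S : Finset (Finset (Fin (n+1)))) (p : Finset (Fin (n+1)) → ℝ)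
    (Y : Finset (Finset (Fin (n+1)))) : ℝ :=
  ∑ X ∈ S.powerset.filter (fun X => clUp X = Y), bern S p X

/-- The lower measure: `P̲(Y) = Σ_{X ⊆ S, X̲ = Y} P(X)`. -/
def lowerP {n : ℕ} (S : Finset (Finset (Fin (n+1)))) (p : Finset (Fin (n+1)) → ℝ)
    (Y : Finset (Finset (Fin (n+1)))) : ℝ :=
  ∑ X ∈ S.powerset.filter (fun X => clLow X = Y), bern S p X

/-- External simplices of `Y` relative to the ambient set `S`: simplices
`σ ∈ S` with `σ ∉ Y` but every nonempty proper subset of `σ` in `Y`. -/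
def extSimp {n : ℕ} (S Y : Finset (Finset (Fin (n+1)))) : Finset (Finset (Fin (n+1))) :=
  S.filter fun σ => σ ∉ Y ∧ ∀ τ : Finset (Fin (n+1)), τ ⊂ σ → τ.Nonempty → τ ∈ Y

/-- Maximal simplices of `Y`: simplices of `Y` not properly contained in another
simplex of `Y`. -/
def maxSimp {n : ℕ} (Y : Finset (Finset (Fin (n+1)))) : Finset (Finset (Fin (n+1))) :=
  Y.filter fun σ => ∀ τ ∈ Y, σ ⊆ τ → σ = τ

/-!
Identify `Σ_{A ⊆ Y ⊆ B} P̲(Y)` with the probability that the random hypergraph `X` satisfies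
`A ⊆ X̲ ⊆ B`. Since `A` is a complex, `A ⊆ X̲` means `A ⊆ X`; and `X̲ ⊆ B` means that `X̲`
contains no external simplex `σ` of `B`, i.e., once `A ⊆ X`, that `X` misses a simplex of `A_{σ}`.
Inclusion-exclusion expresses the probability of this event through the products of `p` over `A`
and unions of the `A_{σ}`, and the alternating sum factors when all these sets are disjoint.

For the upper measure the conditions `A ⊆ X̄ ⊆ B` become: `X` avoids `∂Δₙ \ B`, and `X` meets
`B_{σ}` for each maximal simplex `σ` of `A`. Passing to the complement of `X` exchanges `p` with
`1 - p` and gives conditions of the previous form.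
-/

lemma sum_powerset_sdiff {α M : Type*} [DecidableEq α] [AddCommMonoid M] (S : Finset α)
    (f : Finset α → M) : ∑ X ∈ S.powerset, f (S \ X) = ∑ X ∈ S.powerset, f X :=
  have sdiff_sdiff : ∀ X ∈ S.powerset, S \ (S \ X) = X := fun _ hX =>
    Finset.sdiff_sdiff_eq_self (mem_powerset.1 hX)
  sum_nbij' (S \ ·) (S \ ·) (fun _ _ => mem_powerset.2 sdiff_subset)
    (fun _ _ => mem_powerset.2 sdiff_subset) sdiff_sdiff sdiff_sdiff fun _ _ => rfl

section BernoulliWeight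

variable {α ι R : Type*} [DecidableEq α] [CommRing R]

/-- The probability of `X` as a random subset of `S` that contains each `a ∈ S` independently with
probability `p a`. It generalizes `bern` to an arbitrary ground type and to values in a commutative
ring, where it is only a formal weight. -/
def bernoulliWeight (S : Finset α) (p : α → R) (X : Finset α) : R :=
  (∏ a ∈ X, p a) * ∏ a ∈ S \ X, (1 - p a)

lemma bernoulliWeight_sdiff {S X : Finset α} (hX : X ⊆ S) (p : α → R) :
    bernoulliWeight S p (S \ X) = bernoulliWeight S (fun a => 1 - p a) X := by
  simp only [bernoulliWeight, Finset.sdiff_sdiff_eq_self hX, sub_sub_cancel, mul_comm]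

theorem sum_bernoulliWeight_superset {S A : Finset α} (hA : A ⊆ S) (p : α → R) :
    ∑ X ∈ S.powerset with A ⊆ X, bernoulliWeight S p X = ∏ a ∈ A, p a := by
  have forall_notMem_iff (X : Finset α) : (∀ a ∈ S \ X, a ∉ A) ↔ A ⊆ X := by
    grind
  calc ∑ X ∈ S.powerset with A ⊆ X, bernoulliWeight S p X
      -- Setting `1 - p a` to `0` on `A` kills exactly the subsets that do not contain `A`.
      = ∑ X ∈ S.powerset, (∏ a ∈ X, p a) * ∏ a ∈ S \ X, if a ∉ A then 1 - p a else 0 := by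
        simp only [prod_ite_zero, forall_notMem_iff, sum_filter, bernoulliWeight, mul_ite, mul_zero]
    _ = ∏ a ∈ S, (p a + if a ∉ A then 1 - p a else 0) := (prod_add _ _ _).symm
    _ = ∏ a ∈ S, if a ∈ A then p a else 1 := prod_congr rfl fun a _ => by split_ifs <;> simp
    _ = ∏ a ∈ A, p a := by rw [prod_ite_mem, inter_eq_right.2 hA]

theorem sum_bernoulliWeight_superset_not_superset {S A : Finset α} {E : Finset ι}
    {F : ι → Finset α} (hA : A ⊆ S) (hF : ∀ i ∈ E, F i ⊆ S) (p : α → R) :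
    ∑ X ∈ S.powerset with A ⊆ X ∧ ∀ i ∈ E, ¬ F i ⊆ X, bernoulliWeight S p X =
      ∑ J ∈ E.powerset, (-1) ^ #J * ∏ a ∈ A ∪ J.biUnion F, p a := by
  have indicator_expansion (X : Finset α) :
      (if ∀ i ∈ E, ¬ F i ⊆ X then (1 : R) else 0) =
        ∑ J ∈ E.powerset, if J.biUnion F ⊆ X then (-1) ^ #J else 0 := by
    calc (if ∀ i ∈ E, ¬ F i ⊆ X then (1 : R) else 0)
        = ∏ i ∈ E, if ¬ F i ⊆ X then (1 : R) else 0 := by rw [prod_ite_zero, prod_const_one]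
      _ = ∏ i ∈ E, (1 + if F i ⊆ X then -1 else 0) :=
          prod_congr rfl fun i _ => by split_ifs <;> simp_all
      _ = ∑ J ∈ E.powerset, if J.biUnion F ⊆ X then (-1) ^ #J else 0 := by
          simp only [prod_one_add, prod_ite_zero, prod_const, biUnion_subset]
  calc ∑ X ∈ S.powerset with A ⊆ X ∧ ∀ i ∈ E, ¬ F i ⊆ X, bernoulliWeight S p X
      = ∑ X ∈ S.powerset with A ⊆ X,
          (if ∀ i ∈ E, ¬ F i ⊆ X then 1 else 0) * bernoulliWeight S p X := by
        simp only [← filter_filter, sum_filter, ite_mul, one_mul, zero_mul]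
    _ = ∑ J ∈ E.powerset, ∑ X ∈ S.powerset with A ⊆ X,
          (if J.biUnion F ⊆ X then (-1) ^ #J else 0) * bernoulliWeight S p X := by
        simp only [indicator_expansion, sum_mul]
        exact sum_comm
    _ = ∑ J ∈ E.powerset, (-1) ^ #J *
          ∑ X ∈ S.powerset with A ∪ J.biUnion F ⊆ X, bernoulliWeight S p X := by
        simp only [union_subset_iff, sum_filter, ite_and, mul_sum, mul_ite, ite_mul, mul_zero,
          zero_mul]
    _ = ∑ J ∈ E.powerset, (-1) ^ #J * ∏ a ∈ A ∪ J.biUnion F, p a :=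
        sum_congr rfl fun J hJ => by
          have hFJ : J.biUnion F ⊆ S := biUnion_subset.2 fun i hi => hF i (mem_powerset.1 hJ hi)
          rw [sum_bernoulliWeight_superset (union_subset hA hFJ)]

theorem sum_bernoulliWeight_superset_not_superset_of_disjoint {S A : Finset α} {E : Finset ι}
    {F : ι → Finset α} (hA : A ⊆ S) (hF : ∀ i ∈ E, F i ⊆ S) (hAF : ∀ i ∈ E, Disjoint A (F i))
    (hE : (E : Set ι).PairwiseDisjoint F) (p : α → R) :
    ∑ X ∈ S.powerset with A ⊆ X ∧ ∀ i ∈ E, ¬ F i ⊆ X, bernoulliWeight S p X =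
      (∏ a ∈ A, p a) * ∏ i ∈ E, (1 - ∏ a ∈ F i, p a) := by
  simp only [sum_bernoulliWeight_superset_not_superset hA hF, sub_eq_add_neg, prod_one_add,
    prod_neg, mul_sum]
  refine sum_congr rfl fun J hJ => ?_
  have hJE : J ⊆ E := mem_powerset.1 hJ
  have hAJ : Disjoint A (J.biUnion F) :=
    (disjoint_biUnion_right _ _ _).2 fun i hi => hAF i (hJE hi)
  rw [prod_union hAJ, prod_biUnion (hE.subset (coe_subset.2 hJE)), mul_left_comm]

theorem sum_bernoulliWeight_disjoint_not_disjoint {S C : Finset α} {E : Finset ι}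
    {F : ι → Finset α} (hC : C ⊆ S) (hF : ∀ i ∈ E, F i ⊆ S) (hCF : ∀ i ∈ E, Disjoint C (F i))
    (hE : (E : Set ι).PairwiseDisjoint F) (p : α → R) :
    ∑ X ∈ S.powerset with Disjoint X C ∧ ∀ i ∈ E, ¬ Disjoint X (F i), bernoulliWeight S p X =
      (∏ a ∈ C, (1 - p a)) * ∏ i ∈ E, (1 - ∏ a ∈ F i, (1 - p a)) := by
  have sdiff_disjoint_iff {X G : Finset α} (hG : G ⊆ S) : Disjoint (S \ X) G ↔ G ⊆ X := by
    grind [disjoint_left]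
  rw [← sum_bernoulliWeight_superset_not_superset_of_disjoint hC hF hCF hE, sum_filter,
    ← sum_powerset_sdiff, sum_filter]
  refine sum_congr rfl fun X hX => ?_
  have complement_iff :
      (Disjoint (S \ X) C ∧ ∀ i ∈ E, ¬ Disjoint (S \ X) (F i)) ↔ C ⊆ X ∧ ∀ i ∈ E, ¬ F i ⊆ X :=
    and_congr (sdiff_disjoint_iff hC)
      (forall₂_congr fun i hi => not_congr (sdiff_disjoint_iff (hF i hi)))
  simp only [complement_iff, bernoulliWeight_sdiff (mem_powerset.1 hX)]

end BernoulliWeight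

section Complex

variable {n : ℕ} {S A B X Y : Finset (Finset (Fin (n + 1)))} {σ : Finset (Fin (n + 1))}

lemma mem_clLow :
    σ ∈ clLow X ↔ σ.Nonempty ∧ ∀ τ : Finset (Fin (n + 1)), τ ⊆ σ → τ.Nonempty → τ ∈ X := by
  simp only [clLow, mem_filter_univ]

lemma clLow_subset (X : Finset (Finset (Fin (n + 1)))) : clLow X ⊆ X := fun σ hσ =>
  (mem_clLow.1 hσ).2 σ Subset.rfl (mem_clLow.1 hσ).1

lemma isComplex_clLow (X : Finset (Finset (Fin (n + 1)))) : IsComplex (clLow X) :=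
  fun _ hσ _ hτσ hτ =>
    mem_clLow.2 ⟨hτ, fun ρ hρτ => (mem_clLow.1 hσ).2 ρ (hρτ.trans hτσ)⟩

lemma IsComplex.subset_clLow_iff (hA : IsComplex A) (hne : ∀ σ ∈ A, σ.Nonempty) :
    A ⊆ clLow X ↔ A ⊆ X :=
  ⟨fun h => h.trans (clLow_subset X),
    fun h σ hσ => mem_clLow.2 ⟨hne σ hσ, fun τ hτσ hτ => h (hA σ hσ τ hτσ hτ)⟩⟩

lemma IsComplex.subset_iff_forall_extSimp_notMem (hY : IsComplex Y) (hYS : Y ⊆ S) :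
    Y ⊆ B ↔ ∀ σ ∈ extSimp S B, σ ∉ Y := by
  refine ⟨fun h σ hσ hσY => (mem_filter.1 hσ).2.1 (h hσY), fun h => ?_⟩
  by_contra hYB
  obtain ⟨ρ, hρY, hρB⟩ := not_subset.1 hYB
  obtain ⟨σ, -, hσ⟩ := exists_le_minimal (Y \ B) (mem_sdiff.2 ⟨hρY, hρB⟩)
  obtain ⟨hσY, hσB⟩ := mem_sdiff.1 hσ.prop
  refine h σ (mem_filter.2 ⟨hYS hσY, hσB, fun τ hτσ hτ => ?_⟩) hσY
  by_contra hτB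
  exact hσ.not_prop_of_lt hτσ (mem_sdiff.2 ⟨hY σ hσY τ hτσ.subset hτ, hτB⟩)

lemma mem_clLow_iff_of_mem_extSimp (hS : ∀ σ ∈ S, σ.Nonempty) (hBS : B ⊆ S) (hAX : A ⊆ X)
    (hσ : σ ∈ extSimp S B) : σ ∈ clLow X ↔ {τ ∈ S | τ ∉ A ∧ τ ⊆ σ} ⊆ X := by
  obtain ⟨hσS, -, hσB⟩ := mem_filter.1 hσ
  refine ⟨fun h τ hτ => ?_, fun h => mem_clLow.2 ⟨hS σ hσS, fun τ hτσ hτ => ?_⟩⟩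
  · obtain ⟨hτS, -, hτσ⟩ := mem_filter.1 hτ
    exact (mem_clLow.1 h).2 τ hτσ (hS τ hτS)
  · have hτS : τ ∈ S := by
      rcases hτσ.eq_or_ssubset with rfl | hτσ
      · exact hσS
      · exact hBS (hσB τ hτσ hτ)
    by_cases hτA : τ ∈ A
    · exact hAX hτA
    · exact h (mem_filter.2 ⟨hτS, hτA, hτσ⟩)

theorem clLow_sandwich_iff (hS : ∀ σ ∈ S, σ.Nonempty) (hA : IsComplex A) (hAB : A ⊆ B)
    (hBS : B ⊆ S) (hXS : X ⊆ S) :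
    A ⊆ clLow X ∧ clLow X ⊆ B ↔
      A ⊆ X ∧ ∀ σ ∈ extSimp S B, ¬ {τ ∈ S | τ ∉ A ∧ τ ⊆ σ} ⊆ X := by
  rw [hA.subset_clLow_iff fun σ hσ => hS σ (hBS (hAB hσ)),
    (isComplex_clLow X).subset_iff_forall_extSimp_notMem ((clLow_subset X).trans hXS)]
  refine and_congr_right fun hAX => forall₂_congr fun σ hσ => not_congr ?_
  exact mem_clLow_iff_of_mem_extSimp hS hBS hAX hσ

lemma mem_clUp : σ ∈ clUp X ↔ σ.Nonempty ∧ ∃ τ ∈ X, σ ⊆ τ := by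
  simp only [clUp, mem_filter_univ]

lemma isComplex_clUp (X : Finset (Finset (Fin (n + 1)))) : IsComplex (clUp X) := by
  intro σ hσ τ hτσ hτ
  obtain ⟨-, ρ, hρX, hσρ⟩ := mem_clUp.1 hσ
  exact mem_clUp.2 ⟨hτ, ρ, hρX, hτσ.trans hσρ⟩

lemma IsComplex.clUp_subset_iff (hB : IsComplex B) (hne : ∀ σ ∈ X, σ.Nonempty) :
    clUp X ⊆ B ↔ X ⊆ B := by
  refine ⟨fun h σ hσ => h (mem_clUp.2 ⟨hne σ hσ, σ, hσ, Subset.rfl⟩), fun h σ hσ => ?_⟩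
  obtain ⟨hσne, ρ, hρX, hσρ⟩ := mem_clUp.1 hσ
  exact hB ρ (h hρX) σ hσρ hσne

lemma IsComplex.subset_iff_maxSimp_subset (hY : IsComplex Y) (hne : ∀ σ ∈ A, σ.Nonempty) :
    A ⊆ Y ↔ maxSimp A ⊆ Y := by
  refine ⟨(filter_subset _ _).trans, fun h σ hσ => ?_⟩
  obtain ⟨μ, hσμ, hμ⟩ := exists_le_maximal A hσ
  exact hY μ (h (mem_filter.2 ⟨hμ.prop, fun τ hτ => hμ.eq_of_le hτ⟩)) σ hσμ (hne σ hσ)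

lemma mem_clUp_iff_not_disjoint (hXB : X ⊆ B) (hσ : σ.Nonempty) :
    σ ∈ clUp X ↔ ¬ Disjoint X {τ ∈ B | σ ⊆ τ} := by
  simp only [mem_clUp, hσ, true_and, not_disjoint_iff, mem_filter]
  exact exists_congr fun τ => and_congr_right fun hτ => (and_iff_right (hXB hτ)).symm

theorem clUp_sandwich_iff (hS : ∀ σ ∈ S, σ.Nonempty) (hB : IsComplex B) (hAB : A ⊆ B)
    (hBS : B ⊆ S) (hXS : X ⊆ S) :
    A ⊆ clUp X ∧ clUp X ⊆ B ↔
      Disjoint X (S \ B) ∧ ∀ σ ∈ maxSimp A, ¬ Disjoint X {τ ∈ B | σ ⊆ τ} := by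
  have hAne : ∀ σ ∈ A, σ.Nonempty := fun σ hσ => hS σ (hBS (hAB hσ))
  have hXB : Disjoint X (S \ B) ↔ X ⊆ B := by
    rw [disjoint_sdiff_iff_le hXS hBS]
  rw [(isComplex_clUp X).subset_iff_maxSimp_subset hAne,
    hB.clUp_subset_iff fun σ hσ => hS σ (hXS hσ), and_comm, hXB]
  refine and_congr_right fun hXB => forall₂_congr fun σ hσ => ?_
  exact mem_clUp_iff_not_disjoint hXB (hAne σ (mem_filter.1 hσ).1)

end Complex

section Sandwich

variable {n : ℕ} {S A B : Finset (Finset (Fin (n + 1)))}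

lemma sum_lowerP (S : Finset (Finset (Fin (n + 1)))) (p : Finset (Fin (n + 1)) → ℝ)
    (T : Finset (Finset (Finset (Fin (n + 1))))) :
    ∑ Y ∈ T, lowerP S p Y = ∑ X ∈ S.powerset with clLow X ∈ T, bernoulliWeight S p X :=
  sum_fiberwise_eq_sum_filter _ _ _ _

lemma sum_upperP (S : Finset (Finset (Fin (n + 1)))) (p : Finset (Fin (n + 1)) → ℝ)
    (T : Finset (Finset (Finset (Fin (n + 1))))) :
    ∑ Y ∈ T, upperP S p Y = ∑ X ∈ S.powerset with clUp X ∈ T, bernoulliWeight S p X :=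
  sum_fiberwise_eq_sum_filter _ _ _ _

theorem sum_lowerP_sandwich (hS : ∀ σ ∈ S, σ.Nonempty) (hA : IsComplex A) (hAB : A ⊆ B)
    (hBS : B ⊆ S) (p : Finset (Fin (n + 1)) → ℝ)
    (hdisj : (extSimp S B : Set (Finset (Fin (n + 1)))).PairwiseDisjoint
      fun σ => {τ ∈ S | τ ∉ A ∧ τ ⊆ σ}) :
    ∑ Y ∈ S.powerset with IsComplex Y ∧ A ⊆ Y ∧ Y ⊆ B, lowerP S p Y =
      (∏ τ ∈ A, p τ) * ∏ σ ∈ extSimp S B, (1 - ∏ τ ∈ S with τ ∉ A ∧ τ ⊆ σ, p τ) := by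
  have clLow_mem_iff : ∀ X ∈ S.powerset,
      (clLow X ∈ {Y ∈ S.powerset | IsComplex Y ∧ A ⊆ Y ∧ Y ⊆ B} ↔
        A ⊆ X ∧ ∀ σ ∈ extSimp S B, ¬ {τ ∈ S | τ ∉ A ∧ τ ⊆ σ} ⊆ X) := by
    intro X hX
    have hXS := mem_powerset.1 hX
    rw [← clLow_sandwich_iff hS hA hAB hBS hXS, mem_filter, mem_powerset,
      and_iff_right ((clLow_subset X).trans hXS), and_iff_right (isComplex_clLow X)]
  rw [sum_lowerP, filter_congr clLow_mem_iff]
  -- `convert` reconciles two decidability instances for the event over which `X` ranges.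
  convert sum_bernoulliWeight_superset_not_superset_of_disjoint (hAB.trans hBS)
    (fun _ _ => filter_subset _ _)
    (fun _ _ => disjoint_left.2 fun _ hτA hτ => (mem_filter.1 hτ).2.1 hτA) hdisj p

theorem sum_upperP_sandwich (hS : ∀ σ ∈ S, σ.Nonempty) (hB : IsComplex B) (hAB : A ⊆ B)
    (hBS : B ⊆ S) (p : Finset (Fin (n + 1)) → ℝ)
    (hdisj : (maxSimp A : Set (Finset (Fin (n + 1)))).PairwiseDisjoint
      fun σ => {τ ∈ B | σ ⊆ τ}) :
    ∑ Y ∈ S.powerset with IsComplex Y ∧ A ⊆ Y ∧ Y ⊆ B, upperP S p Y =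
      (∏ τ ∈ S \ B, (1 - p τ)) * ∏ σ ∈ maxSimp A, (1 - ∏ τ ∈ B with σ ⊆ τ, (1 - p τ)) := by
  have clUp_mem_iff : ∀ X ∈ S.powerset,
      (clUp X ∈ {Y ∈ S.powerset | IsComplex Y ∧ A ⊆ Y ∧ Y ⊆ B} ↔
        Disjoint X (S \ B) ∧ ∀ σ ∈ maxSimp A, ¬ Disjoint X {τ ∈ B | σ ⊆ τ}) := by
    intro X hX
    rw [← clUp_sandwich_iff hS hB hAB hBS (mem_powerset.1 hX), mem_filter, mem_powerset,
      and_iff_right (isComplex_clUp X), and_iff_right_of_imp fun h => h.2.trans hBS]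
  rw [sum_upperP, filter_congr clUp_mem_iff]
  convert sum_bernoulliWeight_disjoint_not_disjoint sdiff_subset
    (fun _ _ => (filter_subset _ _).trans hBS)
    (fun _ _ => disjoint_sdiff_self_left.mono_right (filter_subset _ _)) hdisj p

end Sandwich

theorem sandwich_disjoint_general {n : ℕ} {S A B : Finset (Finset (Fin (n + 1)))}
    (p : Finset (Fin (n + 1)) → ℝ) (hS : ∀ σ ∈ S, σ.Nonempty)
    (hA : IsComplex A) (hB : IsComplex B) (hAB : A ⊆ B) (hBS : B ⊆ S) :
    ((∀ σ ∈ extSimp S B, ∀ σ' ∈ extSimp S B, σ ≠ σ' →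
        Disjoint {τ ∈ S | τ ∉ A ∧ τ ⊆ σ} {τ ∈ S | τ ∉ A ∧ τ ⊆ σ'}) →
      ∑ Y ∈ S.powerset with IsComplex Y ∧ A ⊆ Y ∧ Y ⊆ B, lowerP S p Y =
        (∏ τ ∈ A, p τ) * ∏ σ ∈ extSimp S B, (1 - ∏ τ ∈ S with τ ∉ A ∧ τ ⊆ σ, p τ)) ∧
    ((∀ σ ∈ maxSimp A, ∀ σ' ∈ maxSimp A, σ ≠ σ' →
        Disjoint {τ ∈ B | σ ⊆ τ} {τ ∈ B | σ' ⊆ τ}) →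
      ∑ Y ∈ S.powerset with IsComplex Y ∧ A ⊆ Y ∧ Y ⊆ B, upperP S p Y =
        (∏ τ ∈ S \ B, (1 - p τ)) *
          ∏ σ ∈ maxSimp A, (1 - ∏ τ ∈ B with σ ⊆ τ, (1 - p τ))) :=
  ⟨fun hdisj => sum_lowerP_sandwich hS hA hAB hBS p hdisj,
    fun hdisj => sum_upperP_sandwich hS hB hAB hBS p hdisj⟩

/-- Corollary (simplified sandwich formulae): for simplicial complexes
`A ⊆ B ⊆ ∂Δₙ`, (1) if the sets `A_{σ}` for `σ ∈ E(B)` are pairwise disjoint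
then the lower sandwich probability is `P̃ · ∏_{σ∈E(B)} (1 - P_{σ})`;
(2) if the sets `B_{σ}` for `σ ∈ M(A)` are pairwise disjoint then the upper
sandwich probability is `Q̃ · ∏_{σ∈M(A)} (1 - Q_{σ})`. -/
theorem sandwich_disjoint (n : ℕ) (hn : 1 ≤ n) (p : Finset (Fin (n+1)) → ℝ)
    (hp : ∀ σ ∈ bdry n, 0 ≤ p σ ∧ p σ ≤ 1)
    (A B : Finset (Finset (Fin (n+1))))
    (hA : IsComplex A) (hB : IsComplex B) (hAB : A ⊆ B) (hBb : B ⊆ bdry n) :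
    ((∀ σ ∈ extSimp (bdry n) B, ∀ σ' ∈ extSimp (bdry n) B, σ ≠ σ' →
        Disjoint ((bdry n).filter (fun τ => τ ∉ A ∧ τ ⊆ σ))
          ((bdry n).filter (fun τ => τ ∉ A ∧ τ ⊆ σ'))) →
      ∑ Y ∈ (bdry n).powerset.filter (fun Y => IsComplex Y ∧ A ⊆ Y ∧ Y ⊆ B),
          lowerP (bdry n) p Y
        = (∏ τ ∈ A, p τ) *
          ∏ σ ∈ extSimp (bdry n) B,
            (1 - ∏ τ ∈ (bdry n).filter (fun τ => τ ∉ A ∧ τ ⊆ σ), p τ)) ∧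
    ((∀ σ ∈ maxSimp A, ∀ σ' ∈ maxSimp A, σ ≠ σ' →
        Disjoint (B.filter (fun τ => σ ⊆ τ)) (B.filter (fun τ => σ' ⊆ τ))) →
      ∑ Y ∈ (bdry n).powerset.filter (fun Y => IsComplex Y ∧ A ⊆ Y ∧ Y ⊆ B),
          upperP (bdry n) p Y
        = (∏ τ ∈ bdry n \ B, (1 - p τ)) *
          ∏ σ ∈ maxSimp A, (1 - ∏ τ ∈ B.filter (fun τ => σ ⊆ τ), (1 - p τ))) := by
  exact sandwich_disjoint_general p (fun _ hσ => (mem_filter.1 hσ).2.1) hA hB hAB hBb
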